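/- Let n ≥ 2 and 1 ≤ k ≤ n−1. The number of decorated ordered set partitions ((S_1,…,S_ℓ),(s_1,…,s_ℓ)) of type Δ_{k,n} with 1 ∈ S_1 and at least two blocks (ℓ ≥ 2) equals A_{k−1,n−1} − 1, where A_{k−1,n−1} is the number of permutations σ of {1,…,n−1} having exactly k−1 descents (a descent of σ is an index i ∈ {1,…,n−2} with σ(i) > σ(i+1)). Since decorated ordered set partitions with 1 ∈ S_1 are exactly the representatives of equivalence classes under cyclic rotation of blocks, this says there are exactly A_{k−1,n−1} − 1 hypersimplicial blades of type Δ_{k,n}. -/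

import Mathlib

open Finset

/-- A decorated ordered set partition of type `Δ_{k,n}`: an ordered set partition
`(S_1,…,S_ℓ)` of `{1,…,n}` into nonempty blocks, with integer weights
`1 ≤ s_i ≤ |S_i| − 1` summing to `k`. -/
structure DOSP (n k : ℕ) where
  len : ℕ
  len_pos : 0 < len
  S : Fin len → Finset (Fin n)
  wt : Fin len → ℕ
  blocks_nonempty : ∀ i, (S i).Nonempty
  blocks_disjoint : ∀ i j, i ≠ j → Disjoint (S i) (S j)
  blocks_cover : ∀ x : Fin n, ∃ i, x ∈ S i
  wt_lower : ∀ i, 1 ≤ wt i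
  wt_upper : ∀ i, wt i ≤ (S i).card - 1
  wt_sum : ∑ i, wt i = k

/-!
Record the weights allowed on a block of size `m` by `b_m = X + ⋯ + X ^ (m - 1)`, let `B` be the
exponential generating function of the `b_m` and `A` that of the Eulerian polynomials. A decorated
ordered set partition with `1 ∈ S_1` is a pointed block followed by a sequence of blocks, so these
objects are generated by `B' / (1 - B)`, the derivative marking the block of the element `1`. Both
series are explicit: `(X - 1) B = e^(X x) - X e^x + X - 1`, and refining descents by the first value
of a permutation gives `e^((X - 1) x) A = X A - (X - 1)`. Hence `B' / (1 - B) = X (A - 1)`, and the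
coefficient of `X ^ k x ^ (n - 1) / (n - 1)!` says that decorated ordered set partitions with
`1 ∈ S_1` are as many as permutations with `k - 1` descents. Exactly one of them has a single block.
-/

section ExponentialGeneratingFunctions

open PowerSeries

open scoped Nat

variable {R : Type*} [CommRing R] [Algebra ℚ R]

/-- The exponential generating function `∑ aₙ xⁿ / n!` of a sequence `a`. -/
noncomputable def egf (a : ℕ → R) : R⟦X⟧ := PowerSeries.mk fun n => (n ! : ℚ)⁻¹ • a n

@[simp]
lemma coeff_egf (n : ℕ) (a : ℕ → R) : coeff n (egf a) = (n ! : ℚ)⁻¹ • a n :=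
  coeff_mk _ _

lemma egf_mul (a b : ℕ → R) :
    egf a * egf b =
      egf fun n => ∑ x ∈ antidiagonal n, (n.choose x.1 : R) * (a x.1 * b x.2) := by
  ext n
  rw [coeff_mul, coeff_egf, smul_sum]
  refine sum_congr rfl fun ⟨i, j⟩ hij => ?_
  obtain rfl := mem_antidiagonal.1 hij
  have hchoose : (i ! : ℚ)⁻¹ * (j ! : ℚ)⁻¹ = ((i + j)! : ℚ)⁻¹ * (i + j).choose i := by
    have := (i + j).factorial_ne_zero
    rw [Nat.cast_add_choose]
    field_simp
  rw [coeff_egf, coeff_egf, smul_mul_smul_comm, hchoose, mul_smul, Nat.cast_smul_eq_nsmul,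
    nsmul_eq_mul]

lemma derivative_egf (a : ℕ → R) : d⁄dX R (egf a) = egf fun n => a (n + 1) := by
  ext n
  have hfac : ((n : ℚ) + 1) * ((n + 1)! : ℚ)⁻¹ = (n ! : ℚ)⁻¹ := by
    rw [Nat.factorial_succ]
    push_cast
    field_simp
  rw [coeff_derivative, coeff_egf, coeff_egf, ← hfac, mul_smul, mul_comm, ← Nat.cast_succ,
    ← Nat.cast_succ, Nat.cast_smul_eq_nsmul, nsmul_eq_mul]

lemma egf_pow (t : R) : egf (fun n => t ^ n) = rescale t (exp R) := by
  ext n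
  rw [coeff_egf, coeff_rescale, coeff_exp, one_div, Algebra.smul_def, mul_comm]

variable {ι : Type*} [DecidableEq ι]

lemma derivative_prod_egf (s : Finset ι) (w : ι → ℕ → R) :
    d⁄dX R (∏ i ∈ s, egf (w i)) =
      ∑ j ∈ s, ∏ i ∈ s, egf (Function.update w j (fun n => w j (n + 1)) i) := by
  induction s using Finset.induction_on with
  | empty => simp
  | insert a s ha ih =>
    rw [prod_insert ha, Derivation.leibniz, ih, sum_insert ha, prod_insert ha,
      Function.update_self, smul_eq_mul, smul_eq_mul, add_comm, derivative_egf,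
      mul_comm (∏ i ∈ s, egf (w i)), mul_sum]
    congr! 2 with j hj
    · exact prod_congr rfl fun i hi => by
        rw [Function.update_of_ne (ne_of_mem_of_not_mem hi ha)]
    · rw [prod_insert ha, Function.update_of_ne (ne_of_mem_of_not_mem hj ha).symm]

variable [Fintype ι]

lemma prod_card_fiber_cons {M : Type*} [CommMonoid M] {n : ℕ} (j : ι) (f : Fin n → ι)
    (w : ι → ℕ → M) :
    ∏ i, w i #{x | (Fin.cons j f : Fin (n + 1) → ι) x = i} =
      ∏ i, Function.update w j (fun n => w j (n + 1)) i #{x | f x = i} := by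
  refine prod_congr rfl fun i _ => ?_
  rw [Fin.card_filter_univ_succ]
  rcases eq_or_ne j i with rfl | hij
  · simp
  · simp [hij, hij.symm]

/-- A map is built from left to right by choosing the image of its first element, which shifts the
weight sequence of one fiber; on the other side this is the Leibniz rule. -/
lemma prod_egf (w : ι → ℕ → R) :
    ∏ i, egf (w i) = egf fun n => ∑ f : Fin n → ι, ∏ i, w i #{x | f x = i} := by
  ext n
  induction n generalizing w with
  | zero =>
    rw [coeff_zero_eq_constantCoeff_apply, map_prod]
    simp [← coeff_zero_eq_constantCoeff_apply]
  | succ n ih =>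
    have hunit : IsUnit ((n : R) + 1) := by
      simpa using (Nat.cast_add_one_ne_zero (R := ℚ) n).isUnit.map (algebraMap ℚ R)
    refine hunit.mul_right_cancel ?_
    rw [← coeff_derivative, ← coeff_derivative, derivative_prod_egf, derivative_egf, map_sum,
      coeff_egf, ← (Fin.consEquiv fun _ => ι).sum_comp, Fintype.sum_prod_type, smul_sum]
    refine sum_congr rfl fun j _ => ?_
    rw [ih, coeff_egf]
    exact congrArg _ (sum_congr rfl fun f _ => (prod_card_fiber_cons j f w).symm)

lemma derivative_egf_mul_egf_pow (b : ℕ → R) (r : ℕ) :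
    d⁄dX R (egf b) * egf b ^ r =
      egf fun n => ∑ f : Fin (n + 1) → Fin (r + 1) with f 0 = 0, ∏ i, b #{x | f x = i} := by
  have hprod : d⁄dX R (egf b) * egf b ^ r = ∏ i : Fin (r + 1),
      egf (Function.update (fun _ => b) 0 (fun n => b (n + 1)) i) := by
    simp [Fin.prod_univ_succ, derivative_egf]
  rw [hprod, prod_egf]
  congr 1
  ext1 n
  rw [sum_filter, ← (Fin.consEquiv fun _ => Fin (r + 1)).sum_comp, Fintype.sum_prod_type,
    Fintype.sum_eq_single 0 fun j hj => sum_eq_zero fun f _ => if_neg (by simpa using hj)]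
  exact sum_congr rfl fun f _ => (prod_card_fiber_cons 0 f fun _ => b).symm

end ExponentialGeneratingFunctions

section GeometricExpansion

open PowerSeries

lemma coeff_eq_sum_range_of_mul_one_sub_eq {R : Type*} [CommRing R] {F G B : R⟦X⟧}
    (h : F * (1 - B) = G) (hB : constantCoeff B = 0) {n N : ℕ} (hn : n < N) :
    coeff n F = ∑ r ∈ range N, coeff n (G * B ^ r) := by
  have hdvd : X ^ N ∣ F * B ^ N := (pow_dvd_pow_of_dvd (X_dvd_iff.2 hB) N).mul_left F
  rw [← map_sum, ← mul_sum, ← h, mul_assoc, mul_neg_geom_sum, mul_sub, mul_one, map_sub,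
    X_pow_dvd_iff.1 hdvd n hn, sub_zero]

end GeometricExpansion

section Descents

/-- The number of descents of a permutation. -/
def descentCount {n : ℕ} (σ : Equiv.Perm (Fin n)) : ℕ :=
  #{i : Fin n | ∃ j : Fin n, (j : ℕ) = (i : ℕ) + 1 ∧ σ j < σ i}

/-- The permutation with first value `p` whose remaining values are in the same relative order as
those of `τ`. -/
def consPerm {n : ℕ} (p : Fin (n + 1)) (τ : Equiv.Perm (Fin n)) : Equiv.Perm (Fin (n + 1)) :=
  (finSuccEquiv n).trans ((Equiv.optionCongr τ).trans (finSuccEquiv' p).symm)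

variable {n : ℕ}

@[simp]
lemma consPerm_apply_zero (p : Fin (n + 1)) (τ : Equiv.Perm (Fin n)) : consPerm p τ 0 = p := by
  simp [consPerm]

@[simp]
lemma consPerm_apply_succ (p : Fin (n + 1)) (τ : Equiv.Perm (Fin n)) (i : Fin n) :
    consPerm p τ i.succ = p.succAbove (τ i) := by
  simp [consPerm]

lemma consPerm_bijective (n : ℕ) : Function.Bijective
    fun x : Fin (n + 1) × Equiv.Perm (Fin n) => consPerm x.1 x.2 := by
  rw [Fintype.bijective_iff_injective_and_card]
  constructor
  · rintro ⟨p, τ⟩ ⟨q, ρ⟩ h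
    obtain rfl : p = q := by simpa using DFunLike.congr_fun h 0
    refine Prod.ext rfl (Equiv.ext fun i => ?_)
    simpa using DFunLike.congr_fun h i.succ
  · simp [Fintype.card_perm, Nat.factorial_succ]

lemma sum_perm_fin_succ {M : Type*} [AddCommMonoid M] (g : Equiv.Perm (Fin (n + 1)) → M) :
    ∑ σ, g σ = ∑ p, ∑ τ, g (consPerm p τ) := by
  rw [← (consPerm_bijective n).sum_comp, Fintype.sum_prod_type]

lemma descentCount_consPerm (p : Fin (n + 2)) (τ : Equiv.Perm (Fin (n + 1))) :
    descentCount (consPerm p τ) = (if (τ 0).castSucc < p then 1 else 0) + descentCount τ := by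
  simp [descentCount, Fin.card_filter_univ_succ', Fin.exists_fin_succ (n := n + 1),
    Fin.exists_fin_succ (n := n), Fin.succAbove_lt_iff_castSucc_lt]

lemma descentCount_consPerm_zero (τ : Equiv.Perm (Fin n)) :
    descentCount (consPerm 0 τ) = descentCount τ := by
  cases n with
  | zero => simp [descentCount]
  | succ n => simp [descentCount_consPerm]

open Polynomial

variable (R : Type*)

section CommSemiring

variable [CommSemiring R]

/-- The Eulerian polynomial `∑ σ, X ^ des σ`, the sum being over the permutations of `Fin n`. -/
noncomputable def eulerianPoly (n : ℕ) : R[X] := ∑ σ : Equiv.Perm (Fin n), X ^ descentCount σ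

lemma coeff_eulerianPoly (n k : ℕ) :
    (eulerianPoly R n).coeff k = Nat.card {σ : Equiv.Perm (Fin n) // descentCount σ = k} := by
  simp [eulerianPoly, Polynomial.finsetSum_coeff, Polynomial.coeff_X_pow, Fintype.card_subtype,
    eq_comm]

/-- The descent polynomial of the permutations of `Fin (n + 1)` with first value `p`, which refines
the Eulerian polynomial. -/
noncomputable def firstValueDescentPoly (p : Fin (n + 1)) : R[X] :=
  ∑ τ : Equiv.Perm (Fin n), X ^ descentCount (consPerm p τ)

lemma firstValueDescentPoly_zero : firstValueDescentPoly R (0 : Fin (n + 1)) = eulerianPoly R n :=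
  sum_congr rfl fun τ _ => by rw [descentCount_consPerm_zero]

lemma firstValueDescentPoly_eq_sum (p : Fin (n + 2)) :
    firstValueDescentPoly R p =
      ∑ q, (if q.castSucc < p then X else 1) * firstValueDescentPoly R q := by
  rw [firstValueDescentPoly, sum_perm_fin_succ]
  refine sum_congr rfl fun q _ => ?_
  rw [firstValueDescentPoly, mul_sum]
  refine sum_congr rfl fun τ _ => ?_
  rw [descentCount_consPerm, consPerm_apply_zero, pow_add]
  split_ifs <;> simp

lemma firstValueDescentPoly_last :
    firstValueDescentPoly R (Fin.last (n + 1)) = X * eulerianPoly R (n + 1) := by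
  rw [← firstValueDescentPoly_zero, firstValueDescentPoly_eq_sum, firstValueDescentPoly_eq_sum R 0,
    mul_sum]
  simp [Fin.castSucc_lt_last]

end CommSemiring

variable [CommRing R]

lemma firstValueDescentPoly_succ (p : Fin (n + 1)) :
    firstValueDescentPoly R p.succ =
      firstValueDescentPoly R p.castSucc + (X - 1) * firstValueDescentPoly R p := by
  have hsingle : (X - 1) * firstValueDescentPoly R p =
      ∑ q, if q = p then (X - 1) * firstValueDescentPoly R q else 0 := by simp
  rw [hsingle, firstValueDescentPoly_eq_sum, firstValueDescentPoly_eq_sum R p.castSucc,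
    ← sum_add_distrib]
  refine sum_congr rfl fun q _ => ?_
  rcases lt_trichotomy q p with hq | rfl | hq
  · simp [hq, hq.le, hq.ne]
  · simp only [Fin.castSucc_lt_succ, lt_irrefl, if_true, if_false]
    ring
  · simp [hq.not_ge, hq.not_gt, hq.ne']

/-- The first value `p` is reached from `0` by `p` steps of `firstValueDescentPoly_succ`, each of
which either keeps the number of letters or removes one at the cost of a factor `X - 1`. -/
lemma firstValueDescentPoly_eq_sum_choose (p : Fin (n + 1)) :
    firstValueDescentPoly R p = ∑ x ∈ antidiagonal (p : ℕ),
      ((p : ℕ).choose x.1 : R[X]) * ((X - 1) ^ x.1 * eulerianPoly R (n - x.1)) := by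
  induction n with
  | zero => simp [Fin.fin_one_eq_zero p, firstValueDescentPoly_zero]
  | succ n ihn =>
    induction p using Fin.induction with
    | zero => simp [firstValueDescentPoly_zero]
    | succ p ihp =>
      rw [firstValueDescentPoly_succ, ihp, ihn, Fin.val_castSucc, Fin.val_succ,
        sum_antidiagonal_choose_succ_mul fun i _ => (X - 1) ^ i * eulerianPoly R (n + 1 - i),
        mul_sum]
      refine congrArg _ (sum_congr rfl fun x hx => ?_)
      rw [Nat.choose_symm_of_eq_add (mem_antidiagonal.1 hx).symm, Nat.add_sub_add_right]
      ring

lemma X_mul_eulerianPoly {n : ℕ} (hn : n ≠ 0) :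
    X * eulerianPoly R n = ∑ x ∈ antidiagonal n,
      (n.choose x.1 : R[X]) * ((X - 1) ^ x.1 * eulerianPoly R x.2) := by
  obtain ⟨n, rfl⟩ := Nat.exists_eq_succ_of_ne_zero hn
  rw [← firstValueDescentPoly_last, firstValueDescentPoly_eq_sum_choose, Fin.val_last]
  refine sum_congr rfl fun x hx => ?_
  rw [Nat.sub_eq_of_eq_add' (mem_antidiagonal.1 hx).symm]

end Descents

section BlockSeries

open PowerSeries

open scoped Polynomial

variable (R : Type*)

/-- The polynomial `X + ⋯ + X ^ (m - 1)` generating the weights allowed on a block of size `m`. -/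
noncomputable def blockPoly [Semiring R] (m : ℕ) : R[X] := ∑ s ∈ Icc 1 (m - 1), Polynomial.X ^ s

lemma blockPoly_succ_mul_X_sub_one [Ring R] (m : ℕ) :
    blockPoly R (m + 1) * (Polynomial.X - 1) = Polynomial.X ^ (m + 1) - Polynomial.X := by
  rw [blockPoly, Nat.add_sub_cancel, ← Ico_add_one_right_eq_Icc,
    geom_sum_Ico_mul _ (Nat.le_add_left 1 m), pow_one]

variable [CommRing R]

lemma constantCoeff_egf_blockPoly [Algebra ℚ R] : constantCoeff (egf (blockPoly R)) = 0 := by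
  rw [← coeff_zero_eq_constantCoeff_apply, coeff_egf]
  simp [blockPoly]

lemma C_X_sub_one_mul_injective :
    Function.Injective fun F : R[X]⟦X⟧ => C (Polynomial.X - 1 : R[X]) * F := by
  intro F G h
  ext1 n
  refine (Polynomial.monic_X_sub_C (1 : R)).isRegular.left ?_
  simpa only [coeff_C_mul, Polynomial.C_1] using congrArg (coeff n) h

variable [Algebra ℚ R]

lemma rescale_exp_mul_egf_eulerianPoly :
    rescale (Polynomial.X - 1 : R[X]) (exp R[X]) * egf (eulerianPoly R) =
      C (Polynomial.X : R[X]) * egf (eulerianPoly R) - C (Polynomial.X - 1 : R[X]) := by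
  rw [← egf_pow, egf_mul]
  ext1 n
  rw [map_sub, coeff_C_mul, coeff_egf, coeff_egf, mul_smul_comm, coeff_C]
  rcases eq_or_ne n 0 with rfl | hn
  · simp [eulerianPoly, descentCount]
  · rw [X_mul_eulerianPoly R hn, if_neg hn, sub_zero]

lemma X_sub_one_mul_egf_blockPoly :
    C (Polynomial.X - 1 : R[X]) * egf (blockPoly R) =
      rescale (Polynomial.X : R[X]) (exp R[X]) - C (Polynomial.X : R[X]) * exp R[X] +
        C (Polynomial.X - 1 : R[X]) := by
  rw [← egf_pow]
  ext1 n
  rw [coeff_C_mul, map_add, map_sub, coeff_C_mul, coeff_egf, coeff_egf, coeff_exp, one_div,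
    mul_comm Polynomial.X, ← Algebra.smul_def, ← smul_sub, mul_smul_comm, coeff_C]
  cases n with
  | zero => simp [blockPoly]
  | succ n => rw [mul_comm, blockPoly_succ_mul_X_sub_one, if_neg n.succ_ne_zero, add_zero]

lemma X_sub_one_mul_derivative_egf_blockPoly :
    C (Polynomial.X - 1 : R[X]) * d⁄dX R[X] (egf (blockPoly R)) =
      C (Polynomial.X : R[X]) * (rescale (Polynomial.X : R[X]) (exp R[X]) - exp R[X]) := by
  rw [derivative_egf, ← egf_pow]
  ext1 n
  rw [coeff_C_mul, coeff_C_mul, map_sub, coeff_egf, coeff_egf, coeff_exp, one_div, mul_smul_comm,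
    mul_comm, blockPoly_succ_mul_X_sub_one, Algebra.algebraMap_eq_smul_one, ← smul_sub,
    mul_smul_comm, pow_succ', mul_sub, mul_one]

lemma derivative_egf_blockPoly :
    d⁄dX R[X] (egf (blockPoly R)) =
      C (Polynomial.X : R[X]) * (egf (eulerianPoly R) - 1) * (1 - egf (blockPoly R)) := by
  have hexp : exp R[X] * rescale (Polynomial.X - 1 : R[X]) (exp R[X]) =
      rescale Polynomial.X (exp R[X]) := by
    have hadd := exp_mul_exp_eq_exp_add (A := R[X]) 1 (Polynomial.X - 1)
    rwa [add_sub_cancel, rescale_one, RingHom.id_apply] at hadd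
  have hA := rescale_exp_mul_egf_eulerianPoly R
  have hB := X_sub_one_mul_egf_blockPoly R
  refine C_X_sub_one_mul_injective R ((X_sub_one_mul_derivative_egf_blockPoly R).trans ?_)
  dsimp only
  rw [← hexp]
  rw [← hexp] at hB
  rw [map_sub, map_one] at hA hB ⊢
  linear_combination C Polynomial.X * (egf (eulerianPoly R) - 1) * hB +
    C Polynomial.X * exp R[X] * hA

lemma X_mul_eulerianPoly_eq_sum_range {m N : ℕ} (hm : m ≠ 0) (hN : m < N) :
    Polynomial.X * eulerianPoly R m =
      ∑ r ∈ range N, ∑ f : Fin (m + 1) → Fin (r + 1) with f 0 = 0,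
        ∏ i, blockPoly R #{x | f x = i} := by
  have hcoeff := coeff_eq_sum_range_of_mul_one_sub_eq (derivative_egf_blockPoly R).symm
    (constantCoeff_egf_blockPoly R) hN
  simp only [derivative_egf_mul_egf_pow, coeff_egf, ← smul_sum] at hcoeff
  rw [coeff_C_mul, map_sub, coeff_egf, coeff_one, if_neg hm, sub_zero, mul_smul_comm] at hcoeff
  exact (inv_ne_zero (Nat.cast_ne_zero.2 m.factorial_ne_zero)).isUnit.smul_left_cancel.1 hcoeff

end BlockSeries

section Counting

/-- The weights `s` on blocks of sizes `c` with total `k` that satisfy `1 ≤ s i ≤ c i - 1`; there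
are none if some block is empty. -/
def blockWeights {ι : Type*} [Fintype ι] [DecidableEq ι] (c : ι → ℕ) (k : ℕ) : Finset (ι → ℕ) :=
  {s ∈ Fintype.piFinset fun i => Icc 1 (c i - 1) | ∑ i, s i = k}

lemma mem_blockWeights {ι : Type*} [Fintype ι] [DecidableEq ι] {c : ι → ℕ} {k : ℕ} {s : ι → ℕ} :
    s ∈ blockWeights c k ↔ (∀ i, 1 ≤ s i ∧ s i ≤ c i - 1) ∧ ∑ i, s i = k := by
  simp [blockWeights]

lemma coeff_prod_blockPoly (R : Type*) [CommSemiring R] {ι : Type*} [Fintype ι] [DecidableEq ι]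
    (c : ι → ℕ) (k : ℕ) : (∏ i, blockPoly R (c i)).coeff k = #(blockWeights c k) := by
  simp only [blockPoly, prod_univ_sum, prod_pow_eq_pow_sum, Polynomial.finsetSum_coeff,
    Polynomial.coeff_X_pow, blockWeights, card_filter, Nat.cast_sum, Nat.cast_ite, Nat.cast_one,
    Nat.cast_zero, eq_comm]

/-- The decorated ordered set partitions of `Fin (m + 1)` into `ℓ` blocks with `0` in the first
block, a partition being encoded by the map that sends an element to the index of its block. -/
def pointedBlockMaps (m k ℓ : ℕ) : Finset ((_ : Fin (m + 1) → Fin ℓ) × (Fin ℓ → ℕ)) :=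
  ({f : Fin (m + 1) → Fin ℓ | (f 0 : ℕ) = 0} : Finset _).sigma fun f =>
    blockWeights (fun i => #{x | f x = i}) k

lemma mem_pointedBlockMaps {m k ℓ : ℕ} {x : (_ : Fin (m + 1) → Fin ℓ) × (Fin ℓ → ℕ)} :
    x ∈ pointedBlockMaps m k ℓ ↔
      (x.1 0 : ℕ) = 0 ∧ x.2 ∈ blockWeights (fun i => #{y | x.1 y = i}) k := by
  simp [pointedBlockMaps]

lemma card_pointedBlockMaps_succ (R : Type*) [CommSemiring R] (m k r : ℕ) :
    (#(pointedBlockMaps m k (r + 1)) : R) =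
      (∑ f : Fin (m + 1) → Fin (r + 1) with f 0 = 0, ∏ i, blockPoly R #{x | f x = i}).coeff k := by
  simp [pointedBlockMaps, Polynomial.finsetSum_coeff, coeff_prod_blockPoly]

lemma card_pointedBlockMaps_one {m k : ℕ} (hk : 1 ≤ k) (hkm : k ≤ m) :
    #(pointedBlockMaps m k 1) = 1 := by
  have hcard := card_pointedBlockMaps_succ ℕ m k 0
  rw [Nat.cast_id] at hcard
  rw [hcard]
  simp [Fin.fin_one_eq_zero, Polynomial.finsetSum_coeff, Polynomial.coeff_X_pow, blockPoly, hk, hkm]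

lemma sum_card_pointedBlockMaps {m : ℕ} (hm : m ≠ 0) (k : ℕ) :
    ∑ ℓ ∈ Icc 1 (m + 1), #(pointedBlockMaps m (k + 1) ℓ) =
      Nat.card {σ : Equiv.Perm (Fin m) // descentCount σ = k} := by
  rw [← Ico_add_one_right_eq_Icc, sum_Ico_eq_sum_range, ← Nat.cast_inj (R := ℚ),
    ← coeff_eulerianPoly, ← Polynomial.coeff_X_mul,
    X_mul_eulerianPoly_eq_sum_range ℚ hm m.lt_succ_self, Polynomial.finsetSum_coeff, Nat.cast_sum]
  exact sum_congr rfl fun r _ => by rw [add_comm 1 r, card_pointedBlockMaps_succ]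

namespace DOSP

variable {n k : ℕ}

/-- The index of the block containing a given element. -/
noncomputable def blockIndex (D : DOSP n k) (x : Fin n) : Fin D.len :=
  (D.blocks_cover x).choose

lemma mem_S_iff (D : DOSP n k) (x : Fin n) (i : Fin D.len) : x ∈ D.S i ↔ D.blockIndex x = i := by
  have hx : x ∈ D.S (D.blockIndex x) := (D.blocks_cover x).choose_spec
  refine ⟨fun h => ?_, fun h => h ▸ hx⟩
  by_contra hne
  exact disjoint_left.1 (D.blocks_disjoint _ _ hne) hx h

lemma S_eq_filter (D : DOSP n k) (i : Fin D.len) :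
    D.S i = ({x | D.blockIndex x = i} : Finset _) := by
  ext x
  simp [D.mem_S_iff]

lemma wt_mem_blockWeights (D : DOSP n k) :
    D.wt ∈ blockWeights (fun i => #{x | D.blockIndex x = i}) k :=
  mem_blockWeights.2 ⟨fun i => ⟨D.wt_lower i, D.S_eq_filter i ▸ D.wt_upper i⟩, D.wt_sum⟩

lemma len_le (D : DOSP n k) : D.len ≤ n := by
  have hsurj : Function.Surjective D.blockIndex := fun i =>
    (D.blocks_nonempty i).imp fun x hx => (D.mem_S_iff x i).1 hx
  simpa using Fintype.card_le_of_surjective _ hsurj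

/-- The decorated ordered set partition with given block indices and weights. -/
def ofBlockMap [NeZero n] {ℓ : ℕ} (f : Fin n → Fin ℓ) (s : Fin ℓ → ℕ)
    (hs : s ∈ blockWeights (fun i => #{x | f x = i}) k) : DOSP n k where
  len := ℓ
  len_pos := (f 0).pos
  S i := {x | f x = i}
  wt := s
  blocks_nonempty i := card_pos.1 (by have := (mem_blockWeights.1 hs).1 i; omega)
  blocks_disjoint i j hij := disjoint_filter.2 fun x _ hi hj => hij (hi.symm.trans hj)
  blocks_cover x := ⟨f x, by simp⟩
  wt_lower i := ((mem_blockWeights.1 hs).1 i).1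
  wt_upper i := ((mem_blockWeights.1 hs).1 i).2
  wt_sum := (mem_blockWeights.1 hs).2

variable [NeZero n]

lemma blockIndex_ofBlockMap {ℓ : ℕ} (f : Fin n → Fin ℓ) (s : Fin ℓ → ℕ)
    (hs : s ∈ blockWeights (fun i => #{x | f x = i}) k) : (ofBlockMap f s hs).blockIndex = f := by
  ext1 x
  exact ((ofBlockMap f s hs).mem_S_iff x (f x)).1 (by simp [ofBlockMap])

lemma ofBlockMap_blockIndex (D : DOSP n k) :
    ofBlockMap D.blockIndex D.wt D.wt_mem_blockWeights = D := by
  have hS := funext D.S_eq_filter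
  cases D
  simpa [ofBlockMap] using hS.symm

/-- Decorated ordered set partitions with `0` in the first block and number of blocks in `L`
correspond to their encodings. -/
noncomputable def equivPointedBlockMaps (m k : ℕ) (L : Finset ℕ) :
    {D : DOSP (m + 1) k // 0 ∈ D.S ⟨0, D.len_pos⟩ ∧ D.len ∈ L} ≃
      L.sigma (pointedBlockMaps m k) where
  toFun D := ⟨⟨D.1.len, D.1.blockIndex, D.1.wt⟩, mem_sigma.2 ⟨D.2.2, mem_pointedBlockMaps.2
    ⟨congrArg Fin.val ((D.1.mem_S_iff _ _).1 D.2.1), D.1.wt_mem_blockWeights⟩⟩⟩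
  invFun x :=
    have hx := mem_pointedBlockMaps.1 (mem_sigma.1 x.2).2
    ⟨ofBlockMap x.1.2.1 x.1.2.2 hx.2, by
      simpa [ofBlockMap, Fin.ext_iff] using ⟨hx.1, (mem_sigma.1 x.2).1⟩⟩
  left_inv D := Subtype.ext D.1.ofBlockMap_blockIndex
  right_inv x := by
    have hx := blockIndex_ofBlockMap x.1.2.1 x.1.2.2 (mem_pointedBlockMaps.1 (mem_sigma.1 x.2).2).2
    exact Subtype.ext (Sigma.ext rfl (heq_of_eq (Sigma.ext hx HEq.rfl)))

lemma card_pointed_len_mem (m k : ℕ) (L : Finset ℕ) :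
    Nat.card {D : DOSP (m + 1) k // 0 ∈ D.S ⟨0, D.len_pos⟩ ∧ D.len ∈ L} =
      ∑ ℓ ∈ L, #(pointedBlockMaps m k ℓ) := by
  rw [Nat.card_congr (equivPointedBlockMaps m k L), Nat.card_eq_fintype_card, Fintype.card_coe,
    card_sigma]

lemma card_pointed_two_le_len (m k : ℕ) :
    Nat.card {D : DOSP (m + 1) k // 0 ∈ D.S ⟨0, D.len_pos⟩ ∧ 2 ≤ D.len} =
      ∑ ℓ ∈ Icc 2 (m + 1), #(pointedBlockMaps m k ℓ) := by
  rw [← card_pointed_len_mem]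
  simp only [mem_Icc, len_le, and_true]

end DOSP

end Counting

/-- the number of decorated ordered set partitions of type `Δ_{k,n}`
with `1 ∈ S_1` and at least two blocks equals `A_{k−1,n−1} − 1`, where
`A_{k−1,n−1}` is the number of permutations of `{1,…,n−1}` with exactly `k−1`
descents; i.e. there are exactly `A_{k−1,n−1} − 1` hypersimplicial blades of
type `Δ_{k,n}`. -/
theorem stmt10 {n k : ℕ} (hn : 2 ≤ n) (hk1 : 1 ≤ k) (hk2 : k ≤ n - 1) :
    Nat.card {D : DOSP n k //
        (⟨0, by omega⟩ : Fin n) ∈ D.S ⟨0, D.len_pos⟩ ∧ 2 ≤ D.len} =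
      Nat.card {σ : Equiv.Perm (Fin (n - 1)) //
        (univ.filter fun i : Fin (n - 1) =>
          ∃ j : Fin (n - 1), (j : ℕ) = (i : ℕ) + 1 ∧ σ j < σ i).card = k - 1} - 1 := by
  obtain ⟨m, rfl⟩ := Nat.exists_eq_add_of_le' (hk1.trans (hk2.trans n.pred_le))
  rw [Nat.add_sub_cancel] at hk2
  obtain ⟨k, rfl⟩ := Nat.exists_eq_add_of_le' hk1
  have hone : #(pointedBlockMaps m (k + 1) 1) = 1 := card_pointedBlockMaps_one hk1 hk2
  have htotal := sum_card_pointedBlockMaps (Nat.ne_of_gt (hk1.trans hk2)) k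
  rw [← add_sum_Ioc_eq_sum_Icc (by omega), hone] at htotal
  exact (DOSP.card_pointed_two_le_len m (k + 1)).trans (Nat.eq_sub_of_add_eq' htotal)
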